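/- Let M be a symmetric n×n rational matrix and let B be an n×k rational matrix (k ≥ 1) with nonnegative entries such that every entry of M − B * Bᵀ is nonnegative, and suppose the columns of B are weakly decreasing in the lexicographic order on Fin n → ℚ (column j+1 ≤lex column j for all j). Let w be the last column of B and let B₀ be the n×(k−1) matrix of the remaining columns. Then: (i) every entry of M − B₀ * B₀ᵀ is nonnegative, so B₀ is again such a matrix with weakly decreasing columns; (ii) w ≤ u in the lexicographic order for every column u of B₀; and (iii) w i * w j ≤ (M − B₀ * B₀ᵀ)_{i j} for all i, j. Hence every such B with k columns is obtained by appending a column satisfying (ii) and (iii) to such a matrix with k−1 columns. -/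

import Mathlib

open Matrix

theorem partial_decomposition_from_smaller {n k : ℕ} (M : Matrix (Fin n) (Fin n) ℚ)
    (hsym : M.IsSymm) (B : Matrix (Fin n) (Fin (k + 1)) ℚ)
    (hB : ∀ i j, 0 ≤ B i j)
    (hMB : ∀ i j, 0 ≤ (M - B * Bᵀ) i j)
    (hlex : ∀ j : Fin k, toLex (fun i => B i j.succ) ≤ toLex (fun i => B i j.castSucc)) :
    -- write `w` for the last column of `B` and `B₀` for the remaining columns
    (∀ i j, 0 ≤ (M - (B.submatrix id Fin.castSucc) * (B.submatrix id Fin.castSucc)ᵀ) i j) ∧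
    (∀ i j, 0 ≤ B.submatrix id Fin.castSucc i j) ∧
    (∀ j : Fin (k - 1) , toLex (fun i => B.submatrix id Fin.castSucc i
        ⟨j + 1, by omega⟩) ≤ toLex (fun i => B.submatrix id Fin.castSucc i ⟨j, by omega⟩)) ∧
    (∀ j : Fin k, toLex (fun i => B i (Fin.last k)) ≤ toLex (fun i => B.submatrix id Fin.castSucc i j)) ∧
    (∀ i j, B i (Fin.last k) * B j (Fin.last k) ≤
      (M - (B.submatrix id Fin.castSucc) * (B.submatrix id Fin.castSucc)ᵀ) i j) := by
  have key : ∀ i j, B i (Fin.last k) * B j (Fin.last k) ≤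
      (M - (B.submatrix id Fin.castSucc) * (B.submatrix id Fin.castSucc)ᵀ) i j := by
    intro i j
    have h := hMB i j
    simp only [Matrix.sub_apply, Matrix.mul_apply, Matrix.transpose_apply,
      Matrix.submatrix_apply, id, Fin.sum_univ_castSucc] at h ⊢
    linarith
  have anti : Antitone (fun j : Fin (k + 1) => toLex (fun i => B i j)) :=
    Fin.antitone_iff_succ_le.2 hlex
  refine ⟨fun i j => le_trans (mul_nonneg (hB _ _) (hB _ _)) (key i j), fun i j => hB _ _,
    fun j => ?_, fun j => ?_, key⟩
  · exact anti (a := Fin.castSucc ⟨j, by omega⟩) (b := Fin.castSucc ⟨j + 1, by omega⟩)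
      (by simp [Fin.le_def])
  · exact anti (Fin.le_last j.castSucc)
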